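/- arXiv:2306.16730 — 2 statements merged into one kernel-verified Lean document; each statement's English description precedes it below -/
import Mathlib

section
/- Let Φ : (0,∞) → [0,∞) be a non-increasing, right-continuous function with Φ(s) → 0 as s → ∞. Suppose there are constants B₀ > 0 and δ₀ > 0 such that r·Φ(s+r) ≤ B₀·Φ(s)^{1+δ₀} for every s > 0 and every r ∈ (0,1]. Then for any s₀ > 0 satisfying Φ(s₀)^{δ₀} < 1/(2B₀), one has Φ(s) = 0 for all s ≥ s₀ + 1/(1 − 2^{−δ₀}). In particular there exists S∞ > 0, depending only on δ₀, B₀ and s₀, such that Φ(s) = 0 for all s ≥ S∞. -/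
/-!
With `q = 2^(-δ₀) ∈ (0,1)`, iterate along `sₙ = s₀ + ∑_{k<n} q^k`, that is, with step lengths
`q^n ≤ 1`. The smallness condition on `Φ s₀` gives `Φ (sₙ) ≤ Φ s₀ / 2^n` by induction: the factor
`Φ(sₙ)^δ₀ ≤ Φ(s₀)^δ₀ q^n` cancels the step length `q^n` and leaves `B₀ Φ(s₀)^δ₀ < 1/2`
(`de_giorgi_decay`). Since `sₙ` stays below `s₀ + 1/(1 - q)`, monotonicity forces `Φ` to vanish
from there on. Some admissible `s₀` exists because `Φ → 0` at infinity.
-/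

/-- Geometric decay along the partial sums of the geometric series of ratio `2^(-δ)`. -/
theorem de_giorgi_decay (Φ : ℝ → ℝ) (B δ : ℝ) (hB : 0 < B) (hδ : 0 < δ)
    (hnonneg : ∀ s, 0 < s → 0 ≤ Φ s)
    (hiter : ∀ s r : ℝ, 0 < s → 0 < r → r ≤ 1 → r * Φ (s + r) ≤ B * (Φ s) ^ (1 + δ))
    (s₀ : ℝ) (hs₀ : 0 < s₀) (hsmall : (Φ s₀) ^ δ < 1 / (2 * B)) (n : ℕ) :
    Φ (s₀ + ∑ k ∈ Finset.range n, ((2 : ℝ) ^ (-δ)) ^ k) ≤ Φ s₀ * (1 / 2) ^ n := by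
  have hq : (0 : ℝ) < 2 ^ (-δ) := by positivity
  have hq1 : (2 : ℝ) ^ (-δ) ≤ 1 :=
    Real.rpow_le_one_of_one_le_of_nonpos one_le_two (by linarith)
  have hhalf : ((1 : ℝ) / 2) ^ δ = 2 ^ (-δ) := by
    rw [one_div, Real.inv_rpow zero_le_two, Real.rpow_neg zero_le_two]
  induction n with
  | zero => simp
  | succ n ih =>
    rw [Finset.sum_range_succ, ← add_assoc]
    set q : ℝ := 2 ^ (-δ)
    set t := s₀ + ∑ k ∈ Finset.range n, q ^ k
    have ht : 0 < t := by positivity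
    have h0 := hnonneg s₀ hs₀
    have hpow : Φ t ^ δ ≤ Φ s₀ ^ δ * q ^ n := by
      calc Φ t ^ δ ≤ (Φ s₀ * (1 / 2) ^ n) ^ δ :=
            Real.rpow_le_rpow (hnonneg t ht) ih hδ.le
        _ = Φ s₀ ^ δ * q ^ n := by
            rw [Real.mul_rpow h0 (by positivity), ← hhalf, Real.rpow_pow_comm (by norm_num)]
    have hBs : B * Φ s₀ ^ δ ≤ 1 / 2 := by
      rw [lt_div_iff₀ (by positivity)] at hsmall
      linarith
    have hstep := hiter t (q ^ n) ht (by positivity) (pow_le_one₀ hq.le hq1)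
    refine le_of_mul_le_mul_left (hstep.trans ?_) (pow_pos hq n)
    calc B * Φ t ^ (1 + δ) = B * (Φ t * Φ t ^ δ) := by
          rw [Real.rpow_one_add' (hnonneg t ht) (by positivity)]
      _ ≤ B * ((Φ s₀ * (1 / 2) ^ n) * (Φ s₀ ^ δ * q ^ n)) := by
          have := Real.rpow_nonneg (hnonneg t ht) δ
          gcongr
      _ = (B * Φ s₀ ^ δ) * (Φ s₀ * (1 / 2) ^ n * q ^ n) := by ring
      _ ≤ 1 / 2 * (Φ s₀ * (1 / 2) ^ n * q ^ n) := by gcongr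
      _ = q ^ n * (Φ s₀ * (1 / 2) ^ (n + 1)) := by ring

/-- De Giorgi iteration lemma: if `Φ` is non-increasing and right-continuous on `(0,∞)`,
nonnegative there, tends to `0` at infinity, and satisfies the iteration inequality
`r · Φ(s+r) ≤ B₀ · Φ(s)^(1+δ₀)` for all `s > 0` and `r ∈ (0,1]`, then for any `s₀ > 0` with
`Φ(s₀)^δ₀ < 1/(2B₀)` we have `Φ(s) = 0` for all `s ≥ s₀ + 1/(1 − 2^(−δ₀))`; in particular
there is `S∞ > 0` with `Φ(s) = 0` for all `s ≥ S∞`. -/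
theorem de_giorgi_iteration (Φ : ℝ → ℝ) (B₀ δ₀ : ℝ)
    (hB₀ : 0 < B₀) (hδ₀ : 0 < δ₀)
    (hnonneg : ∀ s, 0 < s → 0 ≤ Φ s)
    (hmono : ∀ s t, 0 < s → s ≤ t → Φ t ≤ Φ s)
    (hrc : ∀ s, 0 < s → ContinuousWithinAt Φ (Set.Ioi s) s)
    (hlim : Filter.Tendsto Φ Filter.atTop (nhds 0))
    (hiter : ∀ s r : ℝ, 0 < s → 0 < r → r ≤ 1 → r * Φ (s + r) ≤ B₀ * (Φ s) ^ (1 + δ₀)) :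
    (∀ s₀ : ℝ, 0 < s₀ → (Φ s₀) ^ δ₀ < 1 / (2 * B₀) →
        ∀ s : ℝ, s₀ + 1 / (1 - 2 ^ (-δ₀)) ≤ s → Φ s = 0) ∧
      ∃ S : ℝ, 0 < S ∧ ∀ s : ℝ, S ≤ s → Φ s = 0 := by
  have main : ∀ s₀ : ℝ, 0 < s₀ → (Φ s₀) ^ δ₀ < 1 / (2 * B₀) →
      ∀ s : ℝ, s₀ + 1 / (1 - 2 ^ (-δ₀)) ≤ s → Φ s = 0 := by
    intro s₀ hs₀ hsmall s hs
    have hq : (0 : ℝ) < 2 ^ (-δ₀) := by positivity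
    have hq1 : (2 : ℝ) ^ (-δ₀) < 1 :=
      Real.rpow_lt_one_of_one_lt_of_neg one_lt_two (by linarith)
    have hspos : 0 < s := by
      have : 0 < 1 / (1 - (2 : ℝ) ^ (-δ₀)) := one_div_pos.2 (by linarith)
      linarith
    have hbound : ∀ n : ℕ, Φ s ≤ Φ s₀ * (1 / 2) ^ n := by
      intro n
      refine le_trans (hmono _ _ ?_ ?_)
        (de_giorgi_decay Φ B₀ δ₀ hB₀ hδ₀ hnonneg hiter s₀ hs₀ hsmall n)
      · positivity
      · have hsum := (summable_geometric_of_lt_one hq.le hq1).sum_le_tsum (Finset.range n)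
          (fun k _ => by positivity)
        rw [tsum_geometric_of_lt_one hq.le hq1, ← one_div] at hsum
        linarith
    have hto : Filter.Tendsto (fun n : ℕ => Φ s₀ * (1 / 2 : ℝ) ^ n) Filter.atTop (nhds 0) := by
      simpa using (tendsto_pow_atTop_nhds_zero_of_lt_one
        (by norm_num : (0 : ℝ) ≤ 1 / 2) (by norm_num)).const_mul (Φ s₀)
    exact le_antisymm (ge_of_tendsto' hto hbound) (hnonneg s hspos)
  refine ⟨main, ?_⟩
  have hpow : Filter.Tendsto (fun s => Φ s ^ δ₀) Filter.atTop (nhds 0) := by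
    simpa [Real.zero_rpow hδ₀.ne'] using hlim.rpow_const (Or.inr hδ₀.le)
  obtain ⟨s₀, hsmall, hs₀⟩ := ((hpow.eventually_lt_const
    (by positivity : 0 < 1 / (2 * B₀))).and (Filter.eventually_gt_atTop 0)).exists
  have hq1 : (2 : ℝ) ^ (-δ₀) < 1 :=
    Real.rpow_lt_one_of_one_lt_of_neg one_lt_two (by linarith)
  have : 0 < 1 / (1 - (2 : ℝ) ^ (-δ₀)) := one_div_pos.2 (by linarith)
  exact ⟨_, by linarith, main s₀ hs₀ hsmall⟩
end

section
/- Let Φ : (0,∞) → [0,∞) be a non-increasing, right-continuous function with Φ(s) → 0 as s → ∞, and suppose there are constants B₀ > 0 and δ₀ > 0 such that r·Φ(s+r) ≤ B₀·Φ(s)^{1+δ₀} for every s > 0 and every r ∈ (0,1]. If in addition there is a constant E > 0 with Φ(s) ≤ E/s for all s > 0, then Φ(s) = 0 for all s ≥ (2B₀)^{1/δ₀}·E + 1/(1 − 2^{−δ₀}). -/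
/-!
Write `M = (2B₀)^(1/δ₀)` and `q = 2^(-δ₀)`. At `s₀ = M E` the decay bound gives `Φ(s₀) ≤ M⁻¹`, which
is the threshold where `B₀ Φ^δ₀ ≤ 1/2`. Stepping from there with increments `q^k`, each step halves
the bound: if `Φ(sₖ) ≤ 2^(-k) M⁻¹`, then
`q^k Φ(sₖ + q^k) ≤ B₀ (2^(-k) M⁻¹)^(1+δ₀) = q^k 2^(-(k+1)) M⁻¹`.
The increments sum to at most `1/(1-q)`, so by monotonicity `Φ(s) ≤ 2^(-k) M⁻¹` for every `k` as
soon as `s ≥ s₀ + 1/(1-q)`.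
-/

/-- De Giorgi iteration with a Chebyshev-type decay bound: if moreover `Φ(s) ≤ E/s`
for all `s > 0`, then `Φ(s) = 0` for all `s ≥ (2B₀)^(1/δ₀)·E + 1/(1 − 2^(−δ₀))`. -/
theorem de_giorgi_iteration_with_decay (Φ : ℝ → ℝ) (B₀ δ₀ E : ℝ)
    (hB₀ : 0 < B₀) (hδ₀ : 0 < δ₀) (hE : 0 < E)
    (hnonneg : ∀ s, 0 < s → 0 ≤ Φ s)
    (hmono : ∀ s t, 0 < s → s ≤ t → Φ t ≤ Φ s)
    (hrc : ∀ s, 0 < s → ContinuousWithinAt Φ (Set.Ioi s) s)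
    (hlim : Filter.Tendsto Φ Filter.atTop (nhds 0))
    (hiter : ∀ s r : ℝ, 0 < s → 0 < r → r ≤ 1 → r * Φ (s + r) ≤ B₀ * (Φ s) ^ (1 + δ₀))
    (hdecay : ∀ s, 0 < s → Φ s ≤ E / s) :
    ∀ s : ℝ, (2 * B₀) ^ (1 / δ₀) * E + 1 / (1 - 2 ^ (-δ₀)) ≤ s → Φ s = 0 := by
  intro s hs
  set M : ℝ := (2 * B₀) ^ (1 / δ₀) with hM
  set q : ℝ := 2 ^ (-δ₀) with hq
  have hM0 : 0 < M := by positivity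
  have hq0 : 0 < q := by positivity
  have hq1 : q < 1 := Real.rpow_lt_one_of_one_lt_of_neg (by norm_num) (by linarith)
  have hMδ : M ^ δ₀ = 2 * B₀ := by
    rw [hM, ← Real.rpow_mul (by positivity), one_div_mul_cancel hδ₀.ne', Real.rpow_one]
  have hhalf : ∀ k : ℕ, ((1 / 2 : ℝ) ^ k) ^ δ₀ = q ^ k := by
    intro k
    rw [← Real.rpow_natCast, ← Real.rpow_natCast, ← Real.rpow_mul (by norm_num), mul_comm,
      Real.rpow_mul (by norm_num), hq, one_div, Real.inv_rpow (by norm_num),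
      Real.rpow_neg (by norm_num)]
  have hpos : ∀ k : ℕ, 0 < M * E + ∑ i ∈ Finset.range k, q ^ i := fun k =>
    add_pos_of_pos_of_nonneg (by positivity) (Finset.sum_nonneg fun i _ => by positivity)
  have key : ∀ k : ℕ, Φ (M * E + ∑ i ∈ Finset.range k, q ^ i) ≤ (1 / 2) ^ k * M⁻¹ := by
    intro k
    induction k with
    | zero =>
      have h := hdecay (M * E) (by positivity)
      have h2 : E / (M * E) = M⁻¹ := by field_simp
      simpa [h2] using h
    | succ k ih =>
      have hqk : 0 < q ^ k := by positivity
      have h := hiter _ (q ^ k) (hpos k) hqk (pow_le_one₀ hq0.le hq1.le)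
      rw [Finset.sum_range_succ, ← add_assoc]
      have h2 := Real.rpow_le_rpow (hnonneg _ (hpos k)) ih (by linarith : 0 ≤ 1 + δ₀)
      have h3 : B₀ * ((1 / 2 : ℝ) ^ k * M⁻¹) ^ (1 + δ₀)
          = q ^ k * ((1 / 2) ^ (k + 1) * M⁻¹) := by
        rw [Real.rpow_add (by positivity), Real.rpow_one,
          Real.mul_rpow (by positivity) (by positivity), hhalf, Real.inv_rpow hM0.le, hMδ]
        field_simp
        ring
      refine le_of_mul_le_mul_left (h.trans ?_) hqk
      rw [← h3]
      exact mul_le_mul_of_nonneg_left h2 hB₀.le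
  have hsum : ∀ k : ℕ, ∑ i ∈ Finset.range k, q ^ i ≤ 1 / (1 - q) := by
    intro k
    rw [le_div_iff₀ (by linarith), geom_sum_mul_neg]
    linarith [pow_pos hq0 k]
  have hle : ∀ k : ℕ, Φ s ≤ (1 / 2) ^ k * M⁻¹ := fun k =>
    (hmono _ s (hpos k) (by linarith [hsum k])).trans (key k)
  have hlim0 : Filter.Tendsto (fun k : ℕ => (1 / 2 : ℝ) ^ k * M⁻¹) Filter.atTop (nhds 0) := by
    simpa using (tendsto_pow_atTop_nhds_zero_of_lt_one (by norm_num : (0 : ℝ) ≤ 1 / 2)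
      (by norm_num)).mul_const M⁻¹
  have hs0 : 0 < s := by
    have : 0 < 1 / (1 - q) := one_div_pos.2 (by linarith)
    linarith [mul_pos hM0 hE]
  exact le_antisymm (ge_of_tendsto' hlim0 hle) (hnonneg s hs0)
end
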